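/- For every real q with 0 < q < 1, writing t = R(q): 1/√t − α·√t = q^{−1/10} · √(f(−q)/f(−q⁵)) · ∏_{n=1}^∞ 1/(1 + α·q^{n/5} + q^{2n/5}). -/

import Mathlib

/-!
Write `q = x⁵`, `E(q) = (q; q)_∞`, `A = (q, q⁴; q⁵)_∞`, `B = (q², q³; q⁵)_∞` and
`P_c = ∏ (1 + c xⁿ + x²ⁿ)`. Then `R(q) = x A / B`, and `f(-q) / f(-q⁵) = E(q) / E(q⁵) = A B` by the
pentagonal number theorem, so the claim is equivalent to `B - α x A = A B / P_α`.

For a primitive fifth root of unity `w` with `w + w⁻¹ = -β`, Jacobi's triple product expresses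
`(1 - w⁴) E(x) P_β` as `∑ (-w)ʲ x ^ (j(j+1)/2)`. The triangular numbers are `0`, `1` or `3` modulo 5.
The residue class `3`, reached for `j ≡ 2`, contributes zero. The other two classes contribute theta
series in `q`, which the triple product turns back into products. The result is
`E(x) P_β = E(q⁵) (B - α x A)`; see `dissection`. Since
`(1 - X)(1 + α X + X²)(1 + β X + X²) = 1 - X⁵`, also `E(x) P_α P_β = E(q) = E(q⁵) A B`, and
multiplying the dissection by `P_α` gives `P_α (B - α x A) = A B`; see `dissection_quotient`.

The triple product `triple_product` is obtained from its finite form, with `q`-binomial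
coefficients, by dominated convergence; the pentagonal number theorem `fneg_eq_prog` is a special
case of it.
-/

open Real

/-- The Rogers–Ramanujan continued fraction value, via its product expansion,
for real `q` with `0 < q < 1`. -/
noncomputable def rrcf (q : ℝ) : ℝ :=
  q ^ ((1 : ℝ)/5) *
    ∏' n : ℕ,
      (1 - q ^ (5*(n+1) - 1)) * (1 - q ^ (5*(n+1) - 4)) /
      ((1 - q ^ (5*(n+1) - 2)) * (1 - q ^ (5*(n+1) - 3)))

/-- Jacobi's second theta function `θ₂(z; q)` for real `z` and `0 < q < 1`. -/
noncomputable def theta2 (z q : ℝ) : ℝ :=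
  2 * ∑' n : ℕ, q ^ (((n : ℝ) + 1/2)^2) * Real.cos ((2*(n : ℝ) + 1) * z)

/-- Ramanujan's function `f(-q) = ∑_{n ∈ ℤ} (-1)^n q^{n(3n-1)/2}`. -/
noncomputable def fneg (q : ℝ) : ℝ :=
  ∑' n : ℤ, (-1 : ℝ) ^ n * q ^ (n * (3*n - 1) / 2)

/-- The golden-ratio conjugate `α = (1 - √5)/2`. -/
noncomputable def alphaRR : ℝ := (1 - Real.sqrt 5) / 2

/-- The golden ratio `β = (1 + √5)/2`. -/
noncomputable def betaRR : ℝ := (1 + Real.sqrt 5) / 2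

/-! ### The Jacobi triple product -/

section TripleProduct

open Filter Topology Finset

variable {K : Type*} [NormedField K]

/-- The triangular number `j(j+1)/2` of an integer `j`; the division is exact. -/
def tri (j : ℤ) : ℤ := j * (j + 1) / 2

lemma two_mul_tri (j : ℤ) : 2 * tri j = j * (j + 1) :=
  Int.mul_ediv_cancel' (Int.even_mul_succ_self j).two_dvd

/-- The finite `q`-Pochhammer product `(q; q)_n = (1 - q)(1 - q²)⋯(1 - qⁿ)`. -/
def qfac (q : K) (n : ℕ) : K := ∏ k ∈ range n, (1 - q ^ (k + 1))

/-- The reciprocal `1 / (q; q)_m`, extended by zero to negative `m`. With this convention the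
recursion `qinv_sub_one` holds for all integers, so that no boundary terms appear below. -/
def qinv (q : K) : ℤ → K
  | Int.ofNat n => (qfac q n)⁻¹
  | Int.negSucc _ => 0

lemma qinv_natCast (q : K) (n : ℕ) : qinv q n = (qfac q n)⁻¹ := rfl

lemma qinv_of_neg (q : K) {m : ℤ} (hm : m < 0) : qinv q m = 0 := by
  obtain ⟨n, rfl⟩ := Int.eq_negSucc_of_lt_zero hm
  rfl

lemma one_sub_pow_ne_zero {q : K} (hq1 : ‖q‖ < 1) (k : ℕ) : 1 - q ^ (k + 1) ≠ 0 := by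
  intro h
  have h1 : ‖q ^ (k + 1)‖ < 1 := by
    rw [norm_pow]
    exact pow_lt_one₀ (norm_nonneg _) hq1 (Nat.succ_ne_zero k)
  rw [← sub_eq_zero.mp h, norm_one] at h1
  exact lt_irrefl _ h1

lemma qfac_ne_zero {q : K} (hq1 : ‖q‖ < 1) (n : ℕ) : qfac q n ≠ 0 :=
  Finset.prod_ne_zero_iff.mpr fun k _ => one_sub_pow_ne_zero hq1 k

lemma qfac_succ (q : K) (n : ℕ) : qfac q (n + 1) = qfac q n * (1 - q ^ (n + 1)) :=
  Finset.prod_range_succ _ _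

lemma qinv_sub_one {q : K} (hq1 : ‖q‖ < 1) (m : ℤ) :
    qinv q (m - 1) = (1 - q ^ m) * qinv q m := by
  rcases lt_trichotomy m 0 with hm | rfl | hm
  · rw [qinv_of_neg q hm, qinv_of_neg q (by omega), mul_zero]
  · rw [qinv_of_neg q (by omega)]
    simp
  · obtain ⟨n, rfl⟩ : ∃ n : ℕ, m = n + 1 := ⟨(m - 1).toNat, by omega⟩
    have h1 := one_sub_pow_ne_zero hq1 n
    have h2 := qfac_ne_zero hq1 n
    rw [add_sub_cancel_right, qinv_natCast, ← Nat.cast_succ, qinv_natCast, zpow_natCast,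
      Nat.succ_eq_add_one, qfac_succ]
    field_simp

/-- The finite form of the triple product: the coefficients are the central `q`-binomial
coefficients `(q; q)_{2n} / ((q; q)_{n+j} (q; q)_{n-j})`. -/
lemma hasSum_finite_triple_product {q z : K} (hq0 : q ≠ 0) (hq1 : ‖q‖ < 1) (hz : z ≠ 0) (n : ℕ) :
    HasSum (fun j : ℤ => qfac q (2 * n) * qinv q (n + j) * qinv q (n - j) * (z ^ j * q ^ tri j))
      (∏ k ∈ range n, (1 + z * q ^ (k + 1)) * (1 + z⁻¹ * q ^ k)) := by
  induction n with
  | zero =>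
    have h := hasSum_single (f := fun j : ℤ => qfac q (2 * 0) * qinv q ((0 : ℕ) + j) *
      qinv q ((0 : ℕ) - j) * (z ^ j * q ^ tri j)) 0 ?_
    · have h0 : qinv q (0 : ℤ) = 1 := by
        rw [← Nat.cast_zero, qinv_natCast]
        simp [qfac]
      simpa [h0, tri, qfac] using h
    · intro j hj
      rcases lt_or_gt_of_ne hj with hj | hj
      · simp [qinv_of_neg q hj]
      · simp [qinv_of_neg q (show -j < 0 by omega)]
  | succ n ih =>
    -- Multiplying by the new factor `1 + q ^ (2n+1) + z q ^ (n+1) + z⁻¹ q ^ n` combines three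
    -- shifts of the previous expansion.
    have e1 := (Equiv.subRight (1 : ℤ)).hasSum_iff.mpr ih
    have e2 := (Equiv.addRight (1 : ℤ)).hasSum_iff.mpr ih
    have h := ((ih.mul_left (1 + q ^ (2 * n + 1))).add (e1.mul_left (z * q ^ (n + 1)))).add
      (e2.mul_left (z⁻¹ * q ^ n))
    have hP : ∀ P : K, P * ((1 + z * q ^ (n + 1)) * (1 + z⁻¹ * q ^ n)) =
        (1 + q ^ (2 * n + 1)) * P + z * q ^ (n + 1) * P + z⁻¹ * q ^ n * P := by
      intro P
      field_simp
      ring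
    rw [prod_range_succ, hP]
    refine (congrArg (fun f => HasSum f _) (funext fun j => ?_)).mpr h
    · simp only [Function.comp_apply, Equiv.subRight_apply, Equiv.coe_addRight]
      have t1 : tri (j - 1) = tri j - j := by
        have := two_mul_tri j
        have := two_mul_tri (j - 1)
        linarith
      have t2 : tri (j + 1) = tri j + (j + 1) := by
        have := two_mul_tri j
        have := two_mul_tri (j + 1)
        linarith
      have r1 : qinv q (n + j) = (1 - q ^ (n + 1 + j : ℤ)) * qinv q (n + 1 + j) := by
        rw [← qinv_sub_one hq1]; congr 1; ring
      have r2 : qinv q (n + (j - 1)) = (1 - q ^ (n + j : ℤ)) *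
          ((1 - q ^ (n + 1 + j : ℤ)) * qinv q (n + 1 + j)) := by
        rw [← r1, ← qinv_sub_one hq1]; congr 1; ring
      have r3 : qinv q (n - j) = (1 - q ^ (n + 1 - j : ℤ)) * qinv q (n + 1 - j) := by
        rw [← qinv_sub_one hq1]; congr 1; ring
      have r4 : qinv q (n - (j + 1)) = (1 - q ^ (n - j : ℤ)) *
          ((1 - q ^ (n + 1 - j : ℤ)) * qinv q (n + 1 - j)) := by
        rw [← r3, ← qinv_sub_one hq1]; congr 1; ring
      have r5 : qinv q (n + (j + 1)) = qinv q (n + 1 + j) := by congr 1; ring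
      have r6 : qinv q (n - (j - 1)) = qinv q (n + 1 - j) := by congr 1; ring
      rw [r1, r2, r3, r4, r5, r6, t1, t2, show 2 * (n + 1) = 2 * n + 1 + 1 by ring,
        qfac_succ, qfac_succ]
      push_cast
      generalize qinv q (n + 1 + j) = u
      generalize qinv q (n + 1 - j) = v
      generalize tri j = t
      generalize qfac q (2 * n) = c
      simp only [zpow_add₀ hq0, zpow_sub₀ hq0, zpow_add₀ hz, zpow_sub₀ hz, zpow_natCast, zpow_one]
      have hj : q ^ j ≠ 0 := zpow_ne_zero _ hq0
      field_simp
      ring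

variable [CompleteSpace K]

lemma multipliable_one_add_mul_pow {q : K} (hq1 : ‖q‖ < 1) (c : K) :
    Multipliable fun n : ℕ => 1 + c * q ^ n := by
  refine multipliable_one_add_of_summable ?_
  simp only [norm_mul, norm_pow]
  exact (summable_geometric_of_lt_one (norm_nonneg _) hq1).mul_left _

lemma multipliable_one_sub_pow_succ {q : K} (hq1 : ‖q‖ < 1) :
    Multipliable fun n : ℕ => 1 - q ^ (n + 1) :=
  (multipliable_one_add_mul_pow hq1 (-q)).congr fun n => by ring

lemma tprod_one_sub_pow_succ_ne_zero {q : K} (hq1 : ‖q‖ < 1) :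
    ∏' n : ℕ, (1 - q ^ (n + 1)) ≠ 0 := by
  have h := tprod_one_add_ne_zero_of_summable (f := fun n : ℕ => -q ^ (n + 1))
    (fun n => by simpa [sub_eq_add_neg] using one_sub_pow_ne_zero hq1 n) (by
      simp only [norm_neg, norm_pow]
      exact (summable_nat_add_iff 1).mpr (summable_geometric_of_lt_one (norm_nonneg _) hq1))
  simpa [sub_eq_add_neg] using h

lemma tendsto_qfac {q : K} (hq1 : ‖q‖ < 1) :
    Tendsto (qfac q) atTop (𝓝 (∏' n : ℕ, (1 - q ^ (n + 1)))) :=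
  (multipliable_one_sub_pow_succ hq1).tendsto_prod_tprod_nat

lemma tendsto_qinv {q : K} (hq1 : ‖q‖ < 1) :
    Tendsto (qinv q) atTop (𝓝 (∏' n : ℕ, (1 - q ^ (n + 1)))⁻¹) := by
  have htop : Tendsto Int.toNat atTop atTop :=
    tendsto_atTop.mpr fun b => (eventually_ge_atTop (b : ℤ)).mono fun m hm => by omega
  refine (((tendsto_qfac hq1).inv₀ (tprod_one_sub_pow_succ_ne_zero hq1)).comp htop).congr' ?_
  filter_upwards [eventually_ge_atTop 0] with m hm
  lift m to ℕ using hm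
  rfl

lemma exists_norm_qinv_le {q : K} (hq1 : ‖q‖ < 1) : ∃ C : ℝ, 0 ≤ C ∧ ∀ m, ‖qinv q m‖ ≤ C := by
  have h := ((tendsto_qfac hq1).inv₀ (tprod_one_sub_pow_succ_ne_zero hq1)).norm
  obtain ⟨C, hC⟩ := h.bddAbove_range
  have h0 : 0 ≤ C := (norm_nonneg _).trans (hC ⟨0, rfl⟩)
  refine ⟨C, h0, fun m => ?_⟩
  rcases lt_or_ge m 0 with hm | hm
  · rwa [qinv_of_neg q hm, norm_zero]
  · lift m to ℕ using hm
    exact hC ⟨m, rfl⟩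

lemma summable_pow_mul_pow_tri_nat {q z : K} (hq0 : q ≠ 0) (hq1 : ‖q‖ < 1) (hz : z ≠ 0) :
    Summable fun n : ℕ => z ^ (n : ℤ) * q ^ tri n := by
  refine summable_of_ratio_test_tendsto_lt_one zero_lt_one
    (Eventually.of_forall fun n => mul_ne_zero (zpow_ne_zero _ hz) (zpow_ne_zero _ hq0)) ?_
  have h : Tendsto (fun n : ℕ => ‖z‖ * ‖q‖ ^ (n + 1)) atTop (𝓝 (‖z‖ * 0)) :=
    ((tendsto_pow_atTop_nhds_zero_of_lt_one (norm_nonneg _) hq1).comp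
      (tendsto_add_atTop_nat 1)).const_mul _
  rw [mul_zero] at h
  refine h.congr fun n => ?_
  have t : tri ((n + 1 : ℕ) : ℤ) = tri n + (n + 1 : ℕ) := by
    have := two_mul_tri n
    have := two_mul_tri ((n + 1 : ℕ) : ℤ)
    push_cast at *
    linarith
  rw [t, ← norm_div, zpow_add₀ hq0, zpow_natCast, zpow_natCast, zpow_natCast, ← norm_pow,
    ← norm_mul]
  congr 1
  have := zpow_ne_zero (tri n) hq0
  field_simp
  ring

lemma summable_pow_mul_pow_tri {q z : K} (hq0 : q ≠ 0) (hq1 : ‖q‖ < 1) (hz : z ≠ 0) :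
    Summable fun j : ℤ => z ^ j * q ^ tri j := by
  refine Summable.of_nat_of_neg_add_one (summable_pow_mul_pow_tri_nat hq0 hq1 hz) ?_
  refine ((summable_pow_mul_pow_tri_nat hq0 hq1 (inv_ne_zero hz)).mul_left z⁻¹).congr fun n => ?_
  have t : tri (-((n : ℤ) + 1)) = tri n := by
    unfold tri
    congr 1
    ring
  rw [t, neg_add, zpow_add₀ hz, inv_zpow', zpow_neg_one]
  ring

/-- **Jacobi's triple product identity**
`∏ (1 - qⁿ)(1 + z qⁿ)(1 + z⁻¹ qⁿ⁻¹) = ∑ zʲ q ^ (j(j+1)/2)`. It is the limit of the finite form by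
dominated convergence, since the `q`-binomial coefficients are bounded. -/
theorem triple_product {q z : K} (hq0 : q ≠ 0) (hq1 : ‖q‖ < 1) (hz : z ≠ 0) :
    (∏' n : ℕ, (1 - q ^ (n + 1))) * ((∏' n : ℕ, (1 + z * q ^ (n + 1))) *
      ∏' n : ℕ, (1 + z⁻¹ * q ^ n)) = ∑' j : ℤ, z ^ j * q ^ tri j := by
  have hE0 := tprod_one_sub_pow_succ_ne_zero hq1
  have m1 : Multipliable fun n : ℕ => 1 + z * q ^ (n + 1) :=
    (multipliable_one_add_mul_pow hq1 (z * q)).congr fun n => by ring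
  have m2 := multipliable_one_add_mul_pow hq1 z⁻¹
  have lim1 := m1.tendsto_prod_tprod_nat.mul m2.tendsto_prod_tprod_nat
  simp only [← prod_mul_distrib] at lim1
  obtain ⟨C, hC0, hC⟩ := exists_norm_qinv_le hq1
  obtain ⟨D, hD⟩ := (tendsto_qfac hq1).norm.bddAbove_range
  have hD' : ∀ n, ‖qfac q n‖ ≤ D := fun n => hD ⟨n, rfl⟩
  have hD0 : 0 ≤ D := (norm_nonneg _).trans (hD' 0)
  have htop : Tendsto (fun n : ℕ => (n : ℤ)) atTop atTop := tendsto_natCast_atTop_atTop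
  have hinv := tendsto_qinv hq1
  have hfac := tendsto_qfac hq1
  generalize ∏' n : ℕ, (1 - q ^ (n + 1)) = E at *
  have h2 : Tendsto (fun n : ℕ => 2 * n) atTop atTop :=
    tendsto_atTop.mpr fun b => (eventually_ge_atTop b).mono fun m hm => by omega
  have hterm : ∀ j : ℤ, Tendsto (fun n : ℕ =>
      qfac q (2 * n) * qinv q (n + j) * qinv q (n - j) * (z ^ j * q ^ tri j)) atTop
      (𝓝 (E * E⁻¹ * E⁻¹ * (z ^ j * q ^ tri j))) := by
    intro j
    have h3 : Tendsto (fun n : ℕ => (n : ℤ) + j) atTop atTop :=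
      tendsto_atTop_add_const_right _ j htop
    have h4 : Tendsto (fun n : ℕ => (n : ℤ) - j) atTop atTop := by
      simpa only [sub_eq_add_neg] using tendsto_atTop_add_const_right _ (-j) htop
    exact (((hfac.comp h2).mul (hinv.comp h3)).mul (hinv.comp h4)).mul_const _
  have hbound : ∀ (n : ℕ) (j : ℤ),
      ‖qfac q (2 * n) * qinv q (n + j) * qinv q (n - j) * (z ^ j * q ^ tri j)‖ ≤
        D * C * C * ‖z ^ j * q ^ tri j‖ := by
    intro n j
    rw [norm_mul, norm_mul (qfac q (2 * n) * qinv q (n + j)), norm_mul (qfac q (2 * n))]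
    have b1 := hD' (2 * n)
    have b2 := hC (n + j)
    have b3 := hC (n - j)
    gcongr
  have hs : Summable fun j : ℤ => ‖z ^ j * q ^ tri j‖ := by
    simpa only [norm_mul, norm_zpow] using summable_pow_mul_pow_tri
      (norm_ne_zero_iff.mpr hq0) (by rwa [norm_norm]) (norm_ne_zero_iff.mpr hz)
  have hsum := hs.mul_left (D * C * C)
  have lim2 := tendsto_tsum_of_dominated_convergence hsum hterm (Eventually.of_forall hbound)
  replace lim2 := lim2.congr fun n => (hasSum_finite_triple_product hq0 hq1 hz n).tsum_eq
  rw [tendsto_nhds_unique lim1 lim2, tsum_mul_left, mul_inv_cancel₀ hE0, one_mul,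
    mul_inv_cancel_left₀ hE0]

end TripleProduct

/-! ### Products over residue classes and theta series -/

section Products

open Filter Topology Finset

variable {K : Type*} [NormedField K]

lemma norm_pow_lt_one {q : K} (hq1 : ‖q‖ < 1) {m : ℕ} (hm : 0 < m) : ‖q ^ m‖ < 1 := by
  rw [norm_pow]
  exact pow_lt_one₀ (norm_nonneg _) hq1 hm.ne'

/-- An infinite product may be regrouped according to residue classes modulo `k`. -/
lemma tprod_residues {f : ℕ → K} (hf : Multipliable f) {k : ℕ} (hk : 0 < k)
    (h : Multipliable fun n => ∏ i ∈ range k, f (k * n + i)) :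
    ∏' n, ∏ i ∈ range k, f (k * n + i) = ∏' n, f n := by
  have h1 := h.tendsto_prod_tprod_nat
  have hk' : Tendsto (fun n : ℕ => k * n) atTop atTop :=
    tendsto_atTop.mpr fun b => (eventually_ge_atTop b).mono fun n hn =>
      hn.trans (Nat.le_mul_of_pos_left n hk)
  refine tendsto_nhds_unique h1 ((hf.tendsto_prod_tprod_nat.comp hk').congr fun n => ?_)
  induction n with
  | zero => simp
  | succ n ih =>
    rw [prod_range_succ, ← ih, Function.comp_apply, Function.comp_apply, mul_add, mul_one,
      prod_range_add]

/-- The product `∏ (1 - q ^ (mn + c))` over `n ≥ 0`, that is `(q ^ c; q ^ m)_∞`. -/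
noncomputable def prog (q : K) (m c : ℕ) : K := ∏' n : ℕ, (1 - q ^ (m * n + c))

variable [CompleteSpace K]

lemma multipliable_prog {q : K} (hq1 : ‖q‖ < 1) {m : ℕ} (hm : 0 < m) (c : ℕ) :
    Multipliable fun n : ℕ => 1 - q ^ (m * n + c) :=
  (multipliable_one_add_mul_pow (norm_pow_lt_one hq1 hm) (-q ^ c)).congr fun n => by
    rw [pow_add, pow_mul]
    ring

lemma prog_ne_zero {q : K} (hq1 : ‖q‖ < 1) {m c : ℕ} (hm : 0 < m) (hc : 0 < c) :
    prog q m c ≠ 0 := by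
  have hq := norm_pow_lt_one hq1 hm
  rw [norm_pow] at hq
  have hs : Summable fun n : ℕ => ‖-q ^ (m * n + c)‖ := by
    refine ((summable_geometric_of_lt_one (pow_nonneg (norm_nonneg q) m) hq).mul_right
      (‖q‖ ^ c)).congr fun n => ?_
    rw [norm_neg, norm_pow, pow_add, pow_mul]
  have h := tprod_one_add_ne_zero_of_summable (f := fun n : ℕ => -q ^ (m * n + c))
    (fun n => by
      have := one_sub_pow_ne_zero hq1 (m * n + c - 1)
      rwa [Nat.sub_add_cancel (by omega), sub_eq_add_neg] at this) hs
  simpa only [prog, sub_eq_add_neg] using h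

lemma prog_three {q : K} (hq1 : ‖q‖ < 1) :
    prog q 3 3 * (prog q 3 1 * prog q 3 2) = prog q 1 1 := by
  have m1 := multipliable_prog hq1 (m := 3) (by norm_num) 1
  have m2 := multipliable_prog hq1 (m := 3) (by norm_num) 2
  have m3 := multipliable_prog hq1 (m := 3) (by norm_num) 3
  have h := m3.mul (m1.mul m2)
  have e : (fun n : ℕ => (1 - q ^ (3 * n + 3)) * ((1 - q ^ (3 * n + 1)) * (1 - q ^ (3 * n + 2))))
      = fun n => ∏ i ∈ range 3, (1 - q ^ (1 * (3 * n + i) + 1)) := by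
    funext n
    simp only [prod_range_succ, range_zero, prod_empty, one_mul, add_assoc]
    norm_num
    ring
  rw [prog, prog, prog, prog, ← m1.tprod_mul m2, ← m3.tprod_mul (m1.mul m2), e]
  rw [e] at h
  exact tprod_residues (f := fun n => 1 - q ^ (1 * n + 1)) (multipliable_prog hq1 one_pos 1)
    (by norm_num) h

lemma prog_five {q : K} (hq1 : ‖q‖ < 1) :
    prog q 5 5 * ((prog q 5 1 * prog q 5 4) * (prog q 5 2 * prog q 5 3)) = prog q 1 1 := by
  have m1 := multipliable_prog hq1 (m := 5) (by norm_num) 1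
  have m2 := multipliable_prog hq1 (m := 5) (by norm_num) 2
  have m3 := multipliable_prog hq1 (m := 5) (by norm_num) 3
  have m4 := multipliable_prog hq1 (m := 5) (by norm_num) 4
  have m5 := multipliable_prog hq1 (m := 5) (by norm_num) 5
  have h := m5.mul ((m1.mul m4).mul (m2.mul m3))
  have e : (fun n : ℕ => (1 - q ^ (5 * n + 5)) * (((1 - q ^ (5 * n + 1)) * (1 - q ^ (5 * n + 4))) *
        ((1 - q ^ (5 * n + 2)) * (1 - q ^ (5 * n + 3)))))
      = fun n => ∏ i ∈ range 5, (1 - q ^ (1 * (5 * n + i) + 1)) := by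
    funext n
    simp only [prod_range_succ, range_zero, prod_empty, one_mul, add_assoc]
    norm_num
    ring
  rw [prog, prog, prog, prog, prog, prog, ← m1.tprod_mul m4, ← m2.tprod_mul m3,
    ← (m1.mul m4).tprod_mul (m2.mul m3), ← m5.tprod_mul ((m1.mul m4).mul (m2.mul m3)), e]
  rw [e] at h
  exact tprod_residues (f := fun n => 1 - q ^ (1 * n + 1)) (multipliable_prog hq1 one_pos 1)
    (by norm_num) h

/-- The product `∏ (1 + b xⁿ + x²ⁿ)` over `n ≥ 1`. -/
noncomputable def quadProd (b x : K) : K := ∏' n : ℕ, (1 + b * x ^ (n + 1) + x ^ (2 * (n + 1)))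

lemma multipliable_quad {x : K} (hx1 : ‖x‖ < 1) (b : K) :
    Multipliable fun n : ℕ => 1 + b * x ^ (n + 1) + x ^ (2 * (n + 1)) := by
  have hg := summable_geometric_of_lt_one (norm_nonneg x) hx1
  have h : Summable fun n : ℕ => ‖b * x ^ (n + 1) + x ^ (2 * (n + 1))‖ := by
    refine Summable.of_nonneg_of_le (fun n => norm_nonneg _) (fun n => ?_)
      (hg.mul_left (‖b‖ + 1))
    refine (norm_add_le _ _).trans ?_
    rw [norm_mul, norm_pow, norm_pow, add_mul, one_mul]
    have h1 : ‖x‖ ^ (n + 1) ≤ ‖x‖ ^ n :=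
      pow_le_pow_of_le_one (norm_nonneg _) hx1.le (by omega)
    have h2 : ‖x‖ ^ (2 * (n + 1)) ≤ ‖x‖ ^ n :=
      pow_le_pow_of_le_one (norm_nonneg _) hx1.le (by omega)
    gcongr
  exact (multipliable_one_add_of_summable h).congr fun n => by ring

/-- If `a` and `b` are the roots of `t² = t + 1`, then
`(1 - X)(1 + a X + X²)(1 + b X + X²) = 1 - X⁵`. -/
lemma prog_mul_quadProd {x a b : K} (hx1 : ‖x‖ < 1) (hab : a + b = 1) (hab' : a * b = -1) :
    prog x 1 1 * (quadProd a x * quadProd b x) = prog x 5 5 := by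
  have m1 := multipliable_prog hx1 one_pos 1
  have m2 := multipliable_quad hx1 a
  have m3 := multipliable_quad hx1 b
  rw [prog, quadProd, quadProd, ← m2.tprod_mul m3, ← m1.tprod_mul (m2.mul m3), prog]
  refine tprod_congr fun n => ?_
  have e : x ^ (5 * n + 5) = (x ^ (n + 1)) ^ 5 := by rw [← pow_mul]; ring
  rw [e, one_mul, mul_comm 2, pow_mul]
  generalize x ^ (n + 1) = X
  linear_combination (1 - X) * (X + X ^ 3) * hab + (1 - X) * X ^ 2 * hab'

/-- The theta series `∑ (-1)ʲ q ^ (m j(j+1)/2 - d j)` over all integers `j`. -/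
noncomputable def thetaSum (q : K) (m d : ℤ) : K :=
  ∑' j : ℤ, (-1) ^ j * q ^ (m * tri j - d * j)

/-- The triple product with base `q ^ (c + d)` and `z = -q ^ (-d)`. -/
lemma thetaSum_eq_prog {q : K} (hq0 : q ≠ 0) (hq1 : ‖q‖ < 1) {m c d : ℕ} (hm : 0 < m)
    (h : m = c + d) :
    thetaSum q m d = prog q m m * (prog q m c * prog q m d) := by
  have hz : -(q ^ d)⁻¹ ≠ 0 := neg_ne_zero.mpr (inv_ne_zero (pow_ne_zero _ hq0))
  have key := triple_product (pow_ne_zero m hq0) (norm_pow_lt_one hq1 hm) hz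
  have e1 : ∀ n : ℕ, 1 - (q ^ m) ^ (n + 1) = 1 - q ^ (m * n + m) := fun n => by
    rw [← pow_mul]; rfl
  have e2 : ∀ n : ℕ, 1 + -(q ^ d)⁻¹ * (q ^ m) ^ (n + 1) = 1 - q ^ (m * n + c) := fun n => by
    rw [← pow_mul, mul_add, mul_one, pow_add, h, pow_add q c d, pow_add]
    field_simp
    ring
  have e3 : ∀ n : ℕ, 1 + (-(q ^ d)⁻¹)⁻¹ * (q ^ m) ^ n = 1 - q ^ (m * n + d) := fun n => by
    rw [← pow_mul, pow_add, inv_neg, inv_inv]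
    ring
  have e4 : ∀ j : ℤ, (-(q ^ d)⁻¹) ^ j * (q ^ m) ^ tri j =
      (-1) ^ j * q ^ ((m : ℤ) * tri j - d * j) := fun j => by
    rw [neg_eq_neg_one_mul, mul_zpow, zpow_sub₀ hq0, zpow_mul, zpow_mul, zpow_natCast,
      zpow_natCast, inv_zpow]
    ring
  simp only [e1, e2, e3, e4] at key
  exact key.symm

end Products

/-! ### The 5-dissection -/

section Dissection

/-- The 5-dissection. If `w` is a primitive fifth root of unity with `w + w⁻¹ = -b`, then the sum
side `∑ (-w)ʲ x ^ (j(j+1)/2)` of the triple product splits modulo 5: the class `j ≡ 2` vanishes, the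
classes `0, 4` are multiples of one theta series in `x⁵` and the classes `1, 3` of another. -/
lemma dissection_complex {x w b : ℂ} (hx0 : x ≠ 0) (hx1 : ‖x‖ < 1)
    (hw : w ^ 2 + b * w + 1 = 0) (hb : b ^ 2 = b + 1) :
    prog x 1 1 * quadProd b x =
      thetaSum (x ^ 5) 5 2 - (1 - b) * x * thetaSum (x ^ 5) 5 1 := by
  have hw0 : w ≠ 0 := by
    rintro rfl
    norm_num at hw
  have hw4 : w ^ 4 + w ^ 3 + w ^ 2 + w + 1 = 0 := by
    linear_combination (w ^ 2 + (1 - b) * w + 1) * hw + w ^ 2 * hb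
  have hw5 : w ^ 5 = 1 := by linear_combination (w - 1) * hw4
  have hw1 : 1 - w ^ 4 ≠ 0 := by
    intro h
    have h1 : w = 1 := by linear_combination w * h + hw5
    rw [h1] at hw4
    norm_num at hw4
  have hinv : w⁻¹ = w ^ 4 := by
    field_simp
    linear_combination -hw5
  have hwb : w + w⁻¹ = -b := by
    field_simp
    linear_combination hw
  have key := triple_product hx0 hx1 (neg_ne_zero.mpr hw0)
  have m1 : Multipliable fun n : ℕ => 1 + -w * x ^ (n + 1) :=
    (multipliable_one_add_mul_pow hx1 (-w * x)).congr fun n => by ring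
  have m2 : Multipliable fun n : ℕ => 1 + (-w)⁻¹ * x ^ (n + 1) :=
    (multipliable_one_add_mul_pow hx1 ((-w)⁻¹ * x)).congr fun n => by ring
  have split0 : ∏' n : ℕ, (1 + (-w)⁻¹ * x ^ n) =
      (1 - w ^ 4) * ∏' n : ℕ, (1 + (-w)⁻¹ * x ^ (n + 1)) := by
    rw [tprod_eq_zero_mul' (f := fun n : ℕ => 1 + (-w)⁻¹ * x ^ n) m2, inv_neg, hinv]
    congr 1
    ring
  have hprod : (∏' n : ℕ, (1 + -w * x ^ (n + 1))) * ∏' n : ℕ, (1 + (-w)⁻¹ * x ^ (n + 1)) =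
      ∏' n : ℕ, (1 + b * x ^ (n + 1) + x ^ (2 * (n + 1))) := by
    rw [← m1.tprod_mul m2]
    refine tprod_congr fun n => ?_
    have hww : w * w⁻¹ = 1 := mul_inv_cancel₀ hw0
    rw [inv_neg]
    linear_combination (-x ^ (n + 1)) * hwb + (x ^ (n + 1)) ^ 2 * hww
  have hE : prog x 1 1 = ∏' n : ℕ, (1 - x ^ (n + 1)) := by simp only [prog, one_mul]
  -- the sum side, split by the residue of the index modulo 5
  set f : ℤ → ℂ := fun j => (-w) ^ j * x ^ tri j with hf
  have hs : Summable f := summable_pow_mul_pow_tri hx0 hx1 (neg_ne_zero.mpr hw0)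
  have hsum : ∑' j, f j = (∑' m : ℤ, f (m * 5)) + (∑' m : ℤ, f (m * 5 + 1)) +
      (∑' m : ℤ, f (m * 5 + 2)) + (∑' m : ℤ, f (m * 5 + 3)) + ∑' m : ℤ, f (m * 5 + 4) := by
    let e : Fin 5 × ℤ ≃ ℤ := (Equiv.prodComm (Fin 5) ℤ).trans (Int.divModEquiv 5).symm
    have hs' : Summable (f ∘ e) := e.summable_iff.mpr hs
    rw [← e.tsum_eq f]
    have := hs'.tsum_prod
    simp only [Function.comp_apply] at this
    rw [this, tsum_fintype, Fin.sum_univ_five]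
    simp [e]
  have sgn : ∀ m : ℤ, ((-w) ^ 5) ^ m = (-1 : ℂ) ^ m := fun m => by
    rw [Odd.neg_pow (by decide), hw5]
  have sgn' : ∀ m : ℤ, (-1 : ℂ) ^ (-1 - m) = -(-1) ^ m := fun m => by
    rw [zpow_sub₀ (by norm_num), zpow_neg_one, div_eq_mul_inv, ← inv_zpow, inv_neg_one]
    ring
  have hwz : -w ≠ 0 := neg_ne_zero.mpr hw0
  have pw : ∀ (m : ℤ) (i : ℕ), (-w) ^ (m * 5 + i) = (-1) ^ m * (-w) ^ i := fun m i => by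
    rw [zpow_add₀ hwz, mul_comm m, zpow_mul, zpow_natCast, ← sgn]
    rfl
  have px : ∀ (i : ℕ) (k : ℤ), x ^ (i + 5 * k) = x ^ i * (x ^ 5) ^ k := fun i k => by
    rw [zpow_add₀ hx0, zpow_mul, zpow_natCast]
    rfl
  have s0 : ∑' m : ℤ, f (m * 5) = thetaSum (x ^ 5) 5 2 := by
    refine tsum_congr fun m => ?_
    have t : tri (m * 5) = (0 : ℕ) + 5 * (5 * tri m - 2 * m) := by
      have := two_mul_tri m
      have := two_mul_tri (m * 5)
      push_cast
      linarith
    have := pw m 0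
    rw [Nat.cast_zero, add_zero] at this
    simp only [hf, t, px, this]
    ring
  have s1 : ∑' m : ℤ, f (m * 5 + 1) = (-w * x) * thetaSum (x ^ 5) 5 1 := by
    rw [thetaSum, ← tsum_mul_left]
    refine tsum_congr fun m => ?_
    have t : tri (m * 5 + 1) = (1 : ℕ) + 5 * (5 * tri m - 1 * m) := by
      have := two_mul_tri m
      have := two_mul_tri (m * 5 + 1)
      push_cast
      linarith
    have := pw m 1
    rw [Nat.cast_one] at this
    simp only [hf, t, px, this]
    ring
  have s2 : ∑' m : ℤ, f (m * 5 + 2) = 0 := by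
    -- the involution `m ↦ -1 - m` reverses the sign of each term
    have h := (Equiv.subLeft (-1 : ℤ)).tsum_eq fun m : ℤ => f (m * 5 + 2)
    have h' : ∀ m : ℤ, f ((Equiv.subLeft (-1 : ℤ)) m * 5 + 2) = -f (m * 5 + 2) := fun m => by
      have t : tri ((-1 - m) * 5 + 2) = tri (m * 5 + 2) := by
        unfold tri
        congr 1
        ring
      have p1 := pw m 2
      have p2 := pw (-1 - m) 2
      rw [Nat.cast_ofNat] at p1 p2
      simp only [hf, Equiv.subLeft_apply, t, p1, p2, sgn']
      ring
    simp only [h', tsum_neg] at h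
    linear_combination (-1 / 2 : ℂ) * h
  have s3 : ∑' m : ℤ, f (m * 5 + 3) = (w ^ 3 * x) * thetaSum (x ^ 5) 5 1 := by
    rw [thetaSum, ← tsum_mul_left, ← (Equiv.subLeft (-1 : ℤ)).tsum_eq fun m : ℤ => f (m * 5 + 3)]
    refine tsum_congr fun m => ?_
    have t : tri ((-1 - m) * 5 + 3) = (1 : ℕ) + 5 * (5 * tri m - 1 * m) := by
      have := two_mul_tri m
      have := two_mul_tri ((-1 - m) * 5 + 3)
      push_cast
      linarith
    have := pw (-1 - m) 3
    rw [Nat.cast_ofNat] at this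
    simp only [hf, Equiv.subLeft_apply, t, px, this, sgn']
    ring
  have s4 : ∑' m : ℤ, f (m * 5 + 4) = -w ^ 4 * thetaSum (x ^ 5) 5 2 := by
    rw [thetaSum, ← tsum_mul_left, ← (Equiv.subLeft (-1 : ℤ)).tsum_eq fun m : ℤ => f (m * 5 + 4)]
    refine tsum_congr fun m => ?_
    have t : tri ((-1 - m) * 5 + 4) = (0 : ℕ) + 5 * (5 * tri m - 2 * m) := by
      have := two_mul_tri m
      have := two_mul_tri ((-1 - m) * 5 + 4)
      push_cast
      linarith
    have := pw (-1 - m) 4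
    rw [Nat.cast_ofNat] at this
    simp only [hf, Equiv.subLeft_apply, t, px, this, sgn']
    ring
  rw [hsum, s0, s1, s2, s3, s4, split0, ← hE] at key
  rw [quadProd, ← hprod]
  have hcoef : w - w ^ 3 = (1 - w ^ 4) * (1 - b) := by
    have hwb' : w + w ^ 4 = -b := by rw [← hinv, hwb]
    linear_combination (1 + w ^ 3) * hw5 + (1 - w ^ 4) * hwb'
  apply mul_left_cancel₀ hw1
  linear_combination key - x * thetaSum (x ^ 5) 5 1 * hcoef

/-- The real form of the 5-dissection. -/
lemma dissection {x b : ℝ} (hx0 : 0 < x) (hx1 : x < 1) (hb : b ^ 2 = b + 1) :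
    prog x 1 1 * quadProd b x =
      thetaSum (x ^ 5) 5 2 - (1 - b) * x * thetaSum (x ^ 5) 5 1 := by
  have hx1' : ‖(x : ℂ)‖ < 1 := by rwa [Complex.norm_of_nonneg hx0.le]
  obtain ⟨s, hs⟩ := IsAlgClosed.exists_eq_mul_self (discrim (1 : ℂ) b 1)
  obtain ⟨w, hw⟩ := exists_quadratic_eq_zero one_ne_zero ⟨s, hs⟩
  have h := dissection_complex (x := x) (w := w) (b := b) (Complex.ofReal_ne_zero.mpr hx0.ne') hx1'
    (by linear_combination hw) (by exact_mod_cast hb)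
  have ht : ∀ d : ℤ, thetaSum ((x : ℂ) ^ 5) 5 d = (thetaSum (x ^ 5) 5 d : ℝ) := fun d => by
    rw [thetaSum, thetaSum, Complex.ofReal_tsum]
    push_cast
    rfl
  have hx1n : ‖x‖ < 1 := by rwa [Real.norm_of_nonneg hx0.le]
  have hp : prog (x : ℂ) 1 1 = (prog x 1 1 : ℝ) := by
    have := (multipliable_prog hx1n one_pos 1).map_tprod Complex.ofRealHom
      Complex.continuous_ofReal
    simp only [Complex.ofRealHom_eq_coe] at this
    rw [prog, prog, this]
    push_cast
    rfl
  have hQ : quadProd (b : ℂ) x = (quadProd b x : ℝ) := by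
    have := (multipliable_quad hx1n b).map_tprod Complex.ofRealHom Complex.continuous_ofReal
    simp only [Complex.ofRealHom_eq_coe] at this
    rw [quadProd, quadProd, this]
    push_cast
    rfl
  rw [ht, ht, hp, hQ] at h
  exact_mod_cast h

end Dissection

/-! ### Euler’s function and the Rogers–Ramanujan products -/

section Ramanujan

/-- Euler's pentagonal number theorem. -/
lemma fneg_eq_prog {q : ℝ} (hq0 : 0 < q) (hq1 : q < 1) : fneg q = prog q 1 1 := by
  have hq1' : ‖q‖ < 1 := by rwa [Real.norm_of_nonneg hq0.le]
  have h := thetaSum_eq_prog (m := 3) (c := 1) (d := 2) hq0.ne' hq1' (by norm_num) rfl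
  rw [prog_three hq1'] at h
  rw [← h, fneg, thetaSum]
  refine tsum_congr fun n => ?_
  have e : n * (3 * n - 1) / 2 = ((3 : ℕ) : ℤ) * tri n - ((2 : ℕ) : ℤ) * n := by
    have := two_mul_tri n
    refine Int.ediv_eq_of_eq_mul_left two_ne_zero ?_
    push_cast
    linarith
  rw [e]

lemma prog_pow (q : ℝ) : prog (q ^ 5) 1 1 = prog q 5 5 :=
  tprod_congr fun n => by rw [← pow_mul, one_mul, mul_add, mul_one]

lemma prog_pos {q : ℝ} (hq0 : 0 < q) (hq1 : q < 1) {m c : ℕ} (hm : 0 < m) (hc : 0 < c) :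
    0 < prog q m c := by
  have hq1' : ‖q‖ < 1 := by rwa [Real.norm_of_nonneg hq0.le]
  refine lt_of_le_of_ne ?_ (prog_ne_zero hq1' hm hc).symm
  refine ge_of_tendsto' (multipliable_prog hq1' hm c).hasProd.tendsto_prod_nat fun n =>
    Finset.prod_nonneg fun k _ => ?_
  exact sub_nonneg.mpr (pow_le_one₀ hq0.le hq1.le)

lemma rrcf_eq {q : ℝ} (hq0 : 0 < q) (hq1 : q < 1) :
    rrcf q = q ^ ((1 : ℝ) / 5) *
      ((prog q 5 4 * prog q 5 1) / (prog q 5 3 * prog q 5 2)) := by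
  have hq1' : ‖q‖ < 1 := by rwa [Real.norm_of_nonneg hq0.le]
  have m (c : ℕ) := multipliable_prog hq1' (m := 5) (by norm_num) c
  have ne : ∏' n : ℕ, (1 - q ^ (5 * n + 3)) * (1 - q ^ (5 * n + 2)) ≠ 0 := by
    rw [(m 3).tprod_mul (m 2)]
    exact mul_ne_zero (prog_ne_zero hq1' (by norm_num) (by norm_num))
      (prog_ne_zero hq1' (by norm_num) (by norm_num))
  rw [rrcf, prog, prog, prog, prog, ← (m 4).tprod_mul (m 1), ← (m 3).tprod_mul (m 2),
    ← ((m 4).mul (m 1)).tprod_div₀ ((m 3).mul (m 2)) ne]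
  congr 1

/-- The algebraic heart: with `A = (q, q⁴; q⁵)_∞` and `B = (q², q³; q⁵)_∞`, where `q = x⁵`, the
5-dissection becomes `B - α x A = A B / ∏ (1 + α xⁿ + x²ⁿ)`. -/
lemma dissection_quotient {x a b : ℝ} (hx0 : 0 < x) (hx1 : x < 1) (hab : a + b = 1)
    (hab' : a * b = -1) :
    quadProd a x ≠ 0 ∧
    quadProd a x * (prog (x ^ 5) 5 3 * prog (x ^ 5) 5 2 -
        a * x * (prog (x ^ 5) 5 4 * prog (x ^ 5) 5 1)) =
      (prog (x ^ 5) 5 4 * prog (x ^ 5) 5 1) * (prog (x ^ 5) 5 3 * prog (x ^ 5) 5 2) := by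
  have hx1' : ‖x‖ < 1 := by rwa [Real.norm_of_nonneg hx0.le]
  have hq0 : 0 < x ^ 5 := pow_pos hx0 5
  have hq1' : ‖x ^ 5‖ < 1 := norm_pow_lt_one hx1' (by norm_num)
  have hb : b ^ 2 = b + 1 := by linear_combination b * hab - hab'
  have hD := dissection hx0 hx1 hb
  have hP := prog_mul_quadProd hx1' hab hab'
  have h5 := prog_five hq1'
  have t2 := thetaSum_eq_prog (m := 5) (c := 3) (d := 2) hq0.ne' hq1' (by norm_num) rfl
  have t1 := thetaSum_eq_prog (m := 5) (c := 4) (d := 1) hq0.ne' hq1' (by norm_num) rfl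
  have hE : prog (x ^ 5) 5 5 ≠ 0 := prog_ne_zero hq1' (by norm_num) (by norm_num)
  have hE' : prog x 5 5 ≠ 0 := prog_ne_zero hx1' (by norm_num) (by norm_num)
  rw [← prog_pow x] at hP hE'
  push_cast at t1 t2
  rw [t1, t2] at hD
  refine ⟨fun h => hE' ?_, mul_left_cancel₀ hE ?_⟩
  · rw [← hP, h, zero_mul, mul_zero]
  · linear_combination hP - h5 - quadProd a x * hD +
      quadProd a x * prog (x ^ 5) 5 5 * x * (prog (x ^ 5) 5 4 * prog (x ^ 5) 5 1) * (-hab)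

lemma tprod_inv_quad {q x a : ℝ} (hx0 : 0 < x) (hx1 : x < 1) (hq : q = x ^ 5)
    (ha : quadProd a x ≠ 0) :
    ∏' n : ℕ, 1 / (1 + a * q ^ (((n : ℝ) + 1) / 5) + q ^ ((2 * ((n : ℝ) + 1)) / 5)) =
      (quadProd a x)⁻¹ := by
  have hx1' : ‖x‖ < 1 := by rwa [Real.norm_of_nonneg hx0.le]
  rw [quadProd, ← (multipliable_quad hx1' a).tprod_inv₀ ha]
  refine tprod_congr fun n => ?_
  have e (k : ℕ) (r : ℝ) (hr : 5 * r = k) : q ^ r = x ^ k := by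
    rw [hq, ← rpow_natCast, ← rpow_mul hx0.le, ← rpow_natCast, ← hr]
    norm_num
  rw [one_div, e (n + 1) _ (by push_cast; ring), e (2 * (n + 1)) _ (by push_cast; ring)]

end Ramanujan

theorem ramanujan_product_alpha (q : ℝ) (hq0 : 0 < q) (hq1 : q < 1) :
    1 / Real.sqrt (rrcf q) - alphaRR * Real.sqrt (rrcf q) =
      q ^ (-(1 : ℝ)/10) * Real.sqrt (fneg q / fneg (q^5)) *
        ∏' n : ℕ,
          1 / (1 + alphaRR * q ^ (((n : ℝ) + 1)/5) + q ^ ((2*((n : ℝ) + 1))/5)) := by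
  have hq1' : ‖q‖ < 1 := by rwa [Real.norm_of_nonneg hq0.le]
  obtain ⟨x, hx⟩ : ∃ x, x = q ^ ((1 : ℝ) / 5) := ⟨_, rfl⟩
  have hx0 : 0 < x := hx ▸ rpow_pos_of_pos hq0 _
  have hx1 : x < 1 := hx ▸ rpow_lt_one hq0.le hq1 (by norm_num)
  have hqx : q = x ^ 5 := by
    rw [hx, ← rpow_natCast, ← rpow_mul hq0.le]
    norm_num
  have h5 : √5 ^ 2 = (5 : ℝ) := sq_sqrt (by norm_num)
  obtain ⟨hP, hD⟩ := dissection_quotient (a := alphaRR) (b := betaRR) hx0 hx1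
    (by unfold alphaRR betaRR; ring) (by unfold alphaRR betaRR; linear_combination (-1 / 4) * h5)
  have hA : 0 < prog q 5 4 * prog q 5 1 := mul_pos
    (prog_pos hq0 hq1 (by norm_num) (by norm_num)) (prog_pos hq0 hq1 (by norm_num) (by norm_num))
  have hB : 0 < prog q 5 3 * prog q 5 2 := mul_pos
    (prog_pos hq0 hq1 (by norm_num) (by norm_num)) (prog_pos hq0 hq1 (by norm_num) (by norm_num))
  have hE : fneg q / fneg (q ^ 5) = (prog q 5 4 * prog q 5 1) * (prog q 5 3 * prog q 5 2) := by
    rw [fneg_eq_prog hq0 hq1, fneg_eq_prog (pow_pos hq0 5) (pow_lt_one₀ hq0.le hq1 (by norm_num)),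
      prog_pow, div_eq_iff (prog_ne_zero hq1' (by norm_num) (by norm_num)), ← prog_five hq1']
    ring
  have hr : q ^ (-(1 : ℝ) / 10) = (√x)⁻¹ := by
    rw [hx, sqrt_eq_rpow, ← rpow_mul hq0.le, ← rpow_neg hq0.le]
    norm_num
  rw [hE, rrcf_eq hq0 hq1, ← hx, tprod_inv_quad hx0 hx1 hqx hP, hr]
  rw [← hqx] at hD
  generalize prog q 5 4 * prog q 5 1 = A at *
  generalize prog q 5 3 * prog q 5 2 = B at *
  generalize quadProd alphaRR x = P at *
  rw [sqrt_mul hx0.le, sqrt_div hA.le, sqrt_mul hA.le]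
  have hx2 := sq_sqrt hx0.le
  have hA2 := sq_sqrt hA.le
  have hB2 := sq_sqrt hB.le
  have hx3 := sqrt_pos.mpr hx0
  have hA3 := sqrt_pos.mpr hA
  have hB3 := sqrt_pos.mpr hB
  field_simp
  rw [hx2, hA2, hB2]
  linear_combination hD
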